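/- Let q ≥ 1 and let Σ ⊂ (ℝ^q)* be the restricted root system of u(p,q) with p > q, namely the set of linear functionals ±f_i ± f_j (1 ≤ i < j ≤ q, all four sign combinations), ±2f_i, and ±f_i (1 ≤ i ≤ q), where f_i(x) = x_i. If γ ∈ ℝ^q is nonzero and dominant, i.e., γ_1 ≥ γ_2 ≥ … ≥ γ_q ≥ 0, then span(Σ ∩ γ^⊥) = span(Σ) ∩ γ^⊥ if and only if γ is a positive multiple of (1,…,1,0,…,0) with r ones for some r ∈ [q]. -/

import Mathlib

/-- The coordinate functional `f_i ∈ (ℝ^q)*`, `f_i(x) = x_i` (dual basis of the standard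
basis). -/
def coordFunctional (q : ℕ) (i : Fin q) : Module.Dual ℝ (Fin q → ℝ) :=
  LinearMap.proj i

/-- The restricted root system `Σ ⊂ (ℝ^q)*` of `u(p,q)` with `p > q` : the functionals
`±f_i ± f_j` (`1 ≤ i < j ≤ q`, all four sign combinations), `±2f_i` and `±f_i`
(`1 ≤ i ≤ q`). -/
def restrictedRoots (q : ℕ) : Set (Module.Dual ℝ (Fin q → ℝ)) :=
  {α | (∃ i j : Fin q, i < j ∧
        (α = coordFunctional q i + coordFunctional q j ∨
         α = coordFunctional q i - coordFunctional q j ∨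
         α = -coordFunctional q i + coordFunctional q j ∨
         α = -coordFunctional q i - coordFunctional q j)) ∨
      (∃ i : Fin q, α = (2 : ℝ) • coordFunctional q i ∨
         α = -((2 : ℝ) • coordFunctional q i)) ∨
      (∃ i : Fin q, α = coordFunctional q i ∨ α = -coordFunctional q i)}

/-!
Since `Σ` spans the dual space, `span (Σ ∩ γ^⊥) = span Σ ∩ γ^⊥` says that `Σ ∩ γ^⊥` spans the
hyperplane `γ^⊥`; by duality, this holds iff every `x` killed by all the roots that kill `γ` is a
multiple of `γ`.  For odd `g : ℝ → ℝ`, the vector `(g (γ_i))_i` is always such an `x`.  Truncating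
the identity to `{a | |a| = |γ_i|}`, where `γ_i ≠ 0`, therefore forces all nonzero coordinates of
`γ` to have the same absolute value; conversely, the roots `f_i` and `f_i ± f_j` killing such a `γ`
determine `x` up to scaling.
-/

section LinearAlgebra

open Module Submodule

theorem ker_eval_eq_dualAnnihilator_span_singleton {R M : Type*} [CommSemiring R]
    [AddCommMonoid M] [Module R M] (v : M) :
    LinearMap.ker (Dual.eval R M v) = (R ∙ v).dualAnnihilator := by
  rw [← SetLike.coe_set_eq, coe_dualAnnihilator_span]
  ext φ
  simp

theorem span_eq_ker_eval_iff {K V : Type*} [Field K] [AddCommGroup V] [Module K V]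
    {s : Set (Dual K V)} [FiniteDimensional K (span K s)] {v : V} (hs : ∀ φ ∈ s, φ v = 0) :
    span K s = LinearMap.ker (Dual.eval K V v) ↔
      ∀ x, (∀ φ ∈ s, φ x = 0) → x ∈ K ∙ v := by
  have mem_coann (x : V) : x ∈ (span K s).dualCoannihilator ↔ ∀ φ ∈ s, φ x = 0 :=
    Set.ext_iff.mp (coe_dualCoannihilator_span s) x
  have v_mem : K ∙ v ≤ (span K s).dualCoannihilator := by
    rwa [span_singleton_le_iff_mem, mem_coann]
  calc span K s = LinearMap.ker (Dual.eval K V v)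
    _ ↔ (span K s).dualCoannihilator.dualAnnihilator = (K ∙ v).dualAnnihilator := by
      rw [Subspace.dualCoannihilator_dualAnnihilator_eq,
        ker_eval_eq_dualAnnihilator_span_singleton]
    _ ↔ (span K s).dualCoannihilator ≤ K ∙ v := by
      rw [Subspace.dualAnnihilator_inj, ← v_mem.ge_iff_eq']
    _ ↔ ∀ x, (∀ φ ∈ s, φ x = 0) → x ∈ K ∙ v := by
      simp only [SetLike.le_def, mem_coann]

end LinearAlgebra

section RestrictedRoots

variable {q : ℕ}

theorem coordFunctional_apply (i : Fin q) (x : Fin q → ℝ) : coordFunctional q i x = x i :=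
  rfl

theorem coordFunctional_mem_restrictedRoots (i : Fin q) :
    coordFunctional q i ∈ restrictedRoots q :=
  .inr (.inr ⟨i, .inl rfl⟩)

theorem coordFunctional_sub_mem_restrictedRoots {i j : Fin q} (hij : i ≠ j) :
    coordFunctional q i - coordFunctional q j ∈ restrictedRoots q := by
  rcases hij.lt_or_gt with h | h
  · exact .inl ⟨i, j, h, .inr (.inl rfl)⟩
  · exact .inl ⟨j, i, h, .inr (.inr (.inl (sub_eq_neg_add _ _)))⟩

theorem coordFunctional_add_mem_restrictedRoots (i j : Fin q) :
    coordFunctional q i + coordFunctional q j ∈ restrictedRoots q := by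
  rcases lt_trichotomy i j with h | rfl | h
  · exact .inl ⟨i, j, h, .inl rfl⟩
  · exact .inr (.inl ⟨i, .inl (two_smul ℝ _).symm⟩)
  · exact .inl ⟨j, i, h, .inl (add_comm _ _)⟩

theorem span_restrictedRoots_eq_top : Submodule.span ℝ (restrictedRoots q) = ⊤ := by
  refine top_unique ((Pi.basisFun ℝ (Fin q)).dualBasis.span_eq.ge.trans (Submodule.span_mono ?_))
  rintro _ ⟨i, rfl⟩
  have dual_eq : (Pi.basisFun ℝ (Fin q)).dualBasis i = coordFunctional q i := by
    ext
    simp [coordFunctional]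
  exact dual_eq ▸ coordFunctional_mem_restrictedRoots i

theorem restrictedRoots_apply_comp_eq_zero {g : ℝ → ℝ} (hg : g.Odd)
    {α : Module.Dual ℝ (Fin q → ℝ)} (hα : α ∈ restrictedRoots q) {γ : Fin q → ℝ}
    (hγ : α γ = 0) : α (g ∘ γ) = 0 := by
  have eq_of_eq {a b : ℝ} (h : a = b) : g a = g b := congrArg g h
  have neg_of_neg {a b : ℝ} (h : a = -b) : g a = -g b := h ▸ hg b
  have zero_of_zero {a : ℝ} (h : a = 0) : g a = 0 := h ▸ hg.map_zero
  rcases hα with ⟨i, j, -, rfl | rfl | rfl | rfl⟩ | ⟨i, rfl | rfl⟩ | ⟨i, rfl | rfl⟩ <;>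
    simp only [LinearMap.add_apply, LinearMap.sub_apply, LinearMap.neg_apply,
      LinearMap.smul_apply, coordFunctional_apply, smul_eq_mul, Function.comp_apply] at hγ ⊢
  · linarith [neg_of_neg (a := γ i) (b := γ j) (by linarith)]
  · linarith [eq_of_eq (a := γ i) (b := γ j) (by linarith)]
  · linarith [eq_of_eq (a := γ i) (b := γ j) (by linarith)]
  · linarith [neg_of_neg (a := γ i) (b := γ j) (by linarith)]
  all_goals linarith [zero_of_zero (a := γ i) (by linarith)]

theorem span_restrictedRoots_eq_inf_ker_eval_iff (γ : Fin q → ℝ) :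
    (Submodule.span ℝ {α ∈ restrictedRoots q | α γ = 0} =
        Submodule.span ℝ (restrictedRoots q)
          ⊓ LinearMap.ker (Module.Dual.eval ℝ (Fin q → ℝ) γ)) ↔
      ∀ x, (∀ α ∈ restrictedRoots q, α γ = 0 → α x = 0) → x ∈ Submodule.span ℝ {γ} := by
  rw [span_restrictedRoots_eq_top, top_inf_eq, span_eq_ker_eval_iff fun α hα => hα.2]
  simp only [Set.mem_ofPred_eq, and_imp]

theorem abs_eq_abs_of_forall_mem_span {γ : Fin q → ℝ}
    (h : ∀ x, (∀ α ∈ restrictedRoots q, α γ = 0 → α x = 0) → x ∈ Submodule.span ℝ {γ})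
    {i j : Fin q} (hi : γ i ≠ 0) (hj : γ j ≠ 0) : |γ i| = |γ j| := by
  let g (a : ℝ) : ℝ := if |a| = |γ i| then a else 0
  have g_odd : g.Odd := fun a => by simp only [g, abs_neg, neg_ite, neg_zero]
  obtain ⟨c, hc⟩ := Submodule.mem_span_singleton.mp
    (h (g ∘ γ) fun α hα hαγ => restrictedRoots_apply_comp_eq_zero g_odd hα hαγ)
  have coord_eq (k : Fin q) : c * γ k = g (γ k) := congrFun hc k
  have c_ne_zero : c ≠ 0 := by
    rintro rfl
    exact hi (by simpa [g] using (coord_eq i).symm)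
  by_contra hne
  have : c * γ j = 0 := (coord_eq j).trans (if_neg (Ne.symm hne))
  exact mul_ne_zero c_ne_zero hj this

theorem mem_span_singleton_of_abs_eq_abs {γ x : Fin q → ℝ}
    (hγ : ∀ i j, γ i ≠ 0 → γ j ≠ 0 → |γ i| = |γ j|)
    (hx : ∀ α ∈ restrictedRoots q, α γ = 0 → α x = 0) : x ∈ Submodule.span ℝ {γ} := by
  have zero_of_zero {i : Fin q} (h : γ i = 0) : x i = 0 :=
    hx _ (coordFunctional_mem_restrictedRoots i) h
  have eq_of_eq {i j : Fin q} (h : γ i = γ j) : x i = x j := by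
    rcases eq_or_ne i j with rfl | hij
    · rfl
    · exact sub_eq_zero.mp (hx _ (coordFunctional_sub_mem_restrictedRoots hij) (sub_eq_zero.mpr h))
  have neg_of_neg {i j : Fin q} (h : γ i = -γ j) : x i = -x j :=
    eq_neg_of_add_eq_zero_left
      (hx _ (coordFunctional_add_mem_restrictedRoots i j) (add_eq_zero_iff_eq_neg.mpr h))
  rw [Submodule.mem_span_singleton]
  by_cases hγ0 : γ = 0
  · exact ⟨0, funext fun i => by simp [zero_of_zero (congrFun hγ0 i)]⟩
  obtain ⟨z, hz : γ z ≠ 0⟩ := Function.ne_iff.mp hγ0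
  refine ⟨x z / γ z, funext fun i => ?_⟩
  rw [Pi.smul_apply, smul_eq_mul]
  by_cases hi : γ i = 0
  · rw [hi, zero_of_zero hi, mul_zero]
  rcases abs_eq_abs.mp (hγ i z hi hz) with h | h
  · rw [h, eq_of_eq h, div_mul_cancel₀ _ hz]
  · rw [h, neg_of_neg h, mul_neg, div_mul_cancel₀ _ hz]

end RestrictedRoots

section Indicator

theorem exists_eq_indicator_const_iff {ι M : Type*} [Zero M] {f : ι → M} :
    (∃ (t : M) (s : Set ι), f = s.indicator fun _ => t) ↔
      ∀ i j, f i ≠ 0 → f j ≠ 0 → f i = f j := by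
  constructor
  · rintro ⟨t, s, rfl⟩ i j hi hj
    rw [Set.indicator_of_mem (Set.mem_of_indicator_ne_zero hi),
      Set.indicator_of_mem (Set.mem_of_indicator_ne_zero hj)]
  · intro h
    by_cases hf : f = 0
    · exact ⟨0, ∅, by rw [hf, Set.indicator_empty]; rfl⟩
    obtain ⟨z, hz⟩ := Function.ne_iff.mp hf
    refine ⟨f z, f.support, Set.indicator_support.symm.trans (Set.indicator_congr ?_)⟩
    exact fun i hi => h i z hi hz

theorem exists_eq_setOf_val_lt_of_isLowerSet {q : ℕ} {s : Set (Fin q)} (hs : IsLowerSet s) :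
    ∃ r ≤ q, s = {i : Fin q | i.val < r} := by
  rcases hs.eq_univ_or_Iio with rfl | ⟨a, rfl⟩
  · exact ⟨q, le_rfl, (Set.eq_univ_of_forall Fin.is_lt).symm⟩
  · exact ⟨a, a.is_lt.le, rfl⟩

theorem isLowerSet_support_of_antitone_of_nonneg {ι M : Type*} [Preorder ι] [PartialOrder M]
    [Zero M] {f : ι → M} (hf : Antitone f) (hf0 : 0 ≤ f) : IsLowerSet f.support :=
  fun _ _ hji hi hj => hi (le_antisymm ((hf hji).trans_eq hj) (hf0 _))

theorem exists_eq_indicator_const_iff_exists_eq_ite_val_lt {q : ℕ} {M : Type*} [PartialOrder M]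
    [Zero M] {f : Fin q → M} (hf : Antitone f) (hf0 : 0 ≤ f) (hne : f ≠ 0) :
    (∃ (t : M) (s : Set (Fin q)), f = s.indicator fun _ => t) ↔
      ∃ r : ℕ, 1 ≤ r ∧ r ≤ q ∧ ∃ t : M, 0 < t ∧ f = fun i => if i.val < r then t else 0 := by
  constructor
  · intro h
    obtain ⟨z, hz : f z ≠ 0⟩ := Function.ne_iff.mp hne
    obtain ⟨r, hrq, hr⟩ :=
      exists_eq_setOf_val_lt_of_isLowerSet (isLowerSet_support_of_antitone_of_nonneg hf hf0)
    have ne_zero_iff (i : Fin q) : f i ≠ 0 ↔ i.val < r := Set.ext_iff.mp hr i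
    refine ⟨r, Nat.one_le_of_lt ((ne_zero_iff z).mp hz), hrq, f z, (hf0 z).lt_of_ne' hz, ?_⟩
    funext i
    split_ifs with hi
    · exact exists_eq_indicator_const_iff.mp h i z ((ne_zero_iff i).mpr hi) hz
    · exact not_not.mp (mt (ne_zero_iff i).mp hi)
  · rintro ⟨r, -, -, t, -, rfl⟩
    exact ⟨t, {i | i.val < r}, by ext i; simp [Set.indicator_apply]⟩

end Indicator

theorem admissible_iff_indicator_general {q : ℕ} (γ : Fin q → ℝ) :
    (Submodule.span ℝ {α ∈ restrictedRoots q | α γ = 0} =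
        Submodule.span ℝ (restrictedRoots q)
          ⊓ LinearMap.ker (Module.Dual.eval ℝ (Fin q → ℝ) γ)) ↔
      ∃ (t : ℝ) (s : Set (Fin q)), |γ| = s.indicator fun _ => t := by
  rw [span_restrictedRoots_eq_inf_ker_eval_iff, exists_eq_indicator_const_iff]
  simp only [Pi.abs_apply, ne_eq, abs_eq_zero]
  exact ⟨fun h _ _ => abs_eq_abs_of_forall_mem_span h,
    fun hγ _ => mem_span_singleton_of_abs_eq_abs hγ⟩

/-- **Classification of admissible elements for `U(p,q)`.**  Let `Σ` be the restricted root
system of `u(p,q)` (`p > q`) and let `γ ∈ ℝ^q` be nonzero and dominant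
(`γ_1 ≥ … ≥ γ_q ≥ 0`).  Then `span(Σ ∩ γ^⊥) = span(Σ) ∩ γ^⊥` if and only if `γ` is a
positive multiple of `(1,…,1,0,…,0)` with `r` ones, for some `r ∈ [q]`. -/
theorem admissible_iff_indicator (q : ℕ) (hq : 1 ≤ q)
    (γ : Fin q → ℝ) (hγne : γ ≠ 0)
    (hdom : (∀ i j : Fin q, i ≤ j → γ j ≤ γ i) ∧ ∀ i, 0 ≤ γ i) :
    (Submodule.span ℝ {α ∈ restrictedRoots q | α γ = 0} =
        Submodule.span ℝ (restrictedRoots q)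
          ⊓ LinearMap.ker (Module.Dual.eval ℝ (Fin q → ℝ) γ)) ↔
      ∃ r : ℕ, 1 ≤ r ∧ r ≤ q ∧ ∃ t : ℝ, 0 < t ∧
        γ = fun i => if i.val < r then t else 0 := by
  rw [admissible_iff_indicator_general, abs_of_nonneg (show 0 ≤ γ from hdom.2)]
  exact exists_eq_indicator_const_iff_exists_eq_ite_val_lt hdom.1 hdom.2 hγne
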